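/- Let f : ℝ → ℝ be Lebesgue integrable on ℝ and absolutely continuous with integrable derivative, in the sense that there exists h ∈ L¹(ℝ) such that f(y) − f(x) = ∫_x^y h(t) dt for all real x ≤ y. Then for each x ∈ ℝ, f(x) = (1/(2π)) · lim_{T→∞} ∫_{-T}^{T} e^{ixs} f̂(s) ds. -/

import Mathlib

/-!
Fubini's theorem turns the truncated inversion integral into `2 ∫ f(x - u) sin(Tu)/u du`, and each
half-line is treated separately. Away from `u = 0` the contribution tends to zero by the
Riemann-Lebesgue lemma. Near `u = 0`, writing `f(x ± u)` as `f(x)` plus the integral of `± h` and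
exchanging the order of integration replaces the kernel by increments of the sine integral `Si(Tu)`,
which are bounded and converge since `Si` tends to `π / 2`; dominated convergence applies. The limit
of `Si` comes from inserting `1/t = ∫₀^∞ exp(-ty) dy` and exchanging integrals again.
-/

open MeasureTheory Filter Topology Set Real FourierTransform

/-- The sine integral `Si x = ∫₀ˣ sin t / t dt`, with the singularity at `0` removed by `sinc`. -/
noncomputable def sineIntegral (x : ℝ) : ℝ := ∫ t in (0)..x, sinc t

lemma continuous_sineIntegral : Continuous sineIntegral :=
  intervalIntegral.continuous_primitive (fun _ _ ↦ continuous_sinc.intervalIntegrable _ _) 0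

lemma integral_exp_neg_mul_mul_sin (y T : ℝ) :
    ∫ t in (0)..T, exp (-t * y) * sin t =
      (1 + y ^ 2)⁻¹ - exp (-T * y) * ((y * sin T + cos T) / (1 + y ^ 2)) := by
  have hderiv (t : ℝ) : HasDerivAt (fun t ↦ -(exp (-t * y) * ((y * sin t + cos t) / (1 + y ^ 2))))
      (exp (-t * y) * sin t) t := by
    convert! ((((hasDerivAt_id t).neg.mul_const y).exp).mul
      ((((hasDerivAt_sin t).const_mul y).add (hasDerivAt_cos t)).div_const (1 + y ^ 2))).neg using 1
    simp only [id_eq, Pi.neg_apply, Pi.add_apply]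
    field_simp
    ring
  rw [intervalIntegral.integral_eq_sub_of_hasDerivAt (fun t _ ↦ hderiv t)
    (Continuous.intervalIntegrable (by fun_prop) _ _)]
  simp only [neg_zero, zero_mul, exp_zero, sin_zero, cos_zero, mul_zero, zero_add, one_mul, one_div]
  ring

lemma integral_Ioi_exp_neg_mul {t : ℝ} (ht : 0 < t) : ∫ y in Ioi 0, exp (-t * y) = t⁻¹ := by
  rw [integral_exp_mul_Ioi (neg_lt_zero.2 ht)]
  simp only [mul_zero, exp_zero, neg_div_neg_eq, one_div]

lemma integral_Ioi_exp_neg_mul_mul_sin {t : ℝ} (ht : 0 < t) :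
    ∫ y in Ioi 0, exp (-t * y) * sin t = sinc t := by
  rw [integral_mul_const, integral_Ioi_exp_neg_mul ht, sinc_of_ne_zero ht.ne', inv_mul_eq_div]

lemma integrable_exp_neg_mul_mul_sin (T : ℝ) :
    Integrable (fun p : ℝ × ℝ ↦ exp (-p.1 * p.2) * sin p.1)
      ((volume.restrict (Ioc 0 T)).prod (volume.restrict (Ioi 0))) := by
  rw [integrable_prod_iff (Continuous.aestronglyMeasurable (by fun_prop))]
  constructor
  · filter_upwards [ae_restrict_mem measurableSet_Ioc] with t ht
    exact (exp_neg_integrableOn_Ioi 0 ht.1).mul_const _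
  · refine (continuous_sinc.abs.integrableOn_Ioc).congr_fun (fun t ht ↦ ?_) measurableSet_Ioc
    simp only [norm_mul, norm_eq_abs, abs_exp]
    rw [integral_mul_const, integral_Ioi_exp_neg_mul ht.1, sinc_of_ne_zero ht.1.ne', abs_div,
      abs_of_pos ht.1, inv_mul_eq_div]

lemma abs_mul_sin_add_cos_div_le_one (y t : ℝ) : |(y * sin t + cos t) / (1 + y ^ 2)| ≤ 1 := by
  have hy : 0 < 1 + y ^ 2 := by positivity
  rw [abs_div, abs_of_pos hy, div_le_one hy]
  refine abs_le_of_sq_le_sq ?_ hy.le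
  nlinarith [sq_nonneg (y * cos t - sin t), sin_sq_add_cos_sq t, sq_nonneg y, sq_nonneg (y * y)]

lemma integrableOn_exp_neg_mul_mul_div {T : ℝ} (hT : 0 < T) :
    IntegrableOn (fun y ↦ exp (-T * y) * ((y * sin T + cos T) / (1 + y ^ 2))) (Ioi 0) := by
  refine Integrable.mul_bdd (c := 1) (exp_neg_integrableOn_Ioi 0 hT) ?_
    (.of_forall fun y ↦ abs_mul_sin_add_cos_div_le_one y T)
  exact (Continuous.div (by fun_prop) (by fun_prop) fun y ↦ by positivity).aestronglyMeasurable

lemma sineIntegral_eq_pi_div_two_sub {T : ℝ} (hT : 0 < T) :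
    sineIntegral T =
      π / 2 - ∫ y in Ioi 0, exp (-T * y) * ((y * sin T + cos T) / (1 + y ^ 2)) := by
  calc sineIntegral T = ∫ t in (0)..T, ∫ y in Ioi 0, exp (-t * y) * sin t := by
        refine intervalIntegral.integral_congr_uIoo fun t ht ↦ ?_
        rw [uIoo_of_le hT.le] at ht
        exact (integral_Ioi_exp_neg_mul_mul_sin ht.1).symm
    _ = ∫ y in Ioi 0, ∫ t in (0)..T, exp (-t * y) * sin t := by
        refine intervalIntegral_integral_swap ?_
        rw [uIoc_of_le hT.le]
        exact integrable_exp_neg_mul_mul_sin T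
    _ = π / 2 - ∫ y in Ioi 0, exp (-T * y) * ((y * sin T + cos T) / (1 + y ^ 2)) := by
        simp_rw [integral_exp_neg_mul_mul_sin]
        rw [integral_sub integrable_inv_one_add_sq.integrableOn
          (integrableOn_exp_neg_mul_mul_div hT), integral_Ioi_inv_one_add_sq, arctan_zero, sub_zero]

lemma abs_sineIntegral_sub_pi_div_two_le {T : ℝ} (hT : 0 < T) :
    |sineIntegral T - π / 2| ≤ T⁻¹ := by
  rw [sineIntegral_eq_pi_div_two_sub hT, sub_sub_cancel_left, abs_neg, ← norm_eq_abs,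
    ← integral_Ioi_exp_neg_mul hT]
  refine norm_integral_le_of_norm_le (exp_neg_integrableOn_Ioi 0 hT) (.of_forall fun y ↦ ?_)
  rw [norm_mul, norm_eq_abs, norm_eq_abs, abs_exp]
  exact mul_le_of_le_one_right (exp_nonneg _) (abs_mul_sin_add_cos_div_le_one y T)

theorem tendsto_sineIntegral_atTop : Tendsto sineIntegral atTop (𝓝 (π / 2)) := by
  rw [tendsto_iff_norm_sub_tendsto_zero]
  refine squeeze_zero' (.of_forall fun _ ↦ norm_nonneg _) ?_ tendsto_inv_atTop_zero
  filter_upwards [eventually_gt_atTop 0] with T hT using abs_sineIntegral_sub_pi_div_two_le hT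

lemma abs_sineIntegral_le {x : ℝ} (hx : 0 ≤ x) : |sineIntegral x| ≤ π / 2 + 1 := by
  rcases le_total x 1 with hx1 | hx1
  · have hle : ‖∫ t in (0)..x, sinc t‖ ≤ 1 * |x - 0| :=
      intervalIntegral.norm_integral_le_of_norm_le_const fun t _ ↦ abs_sinc_le_one t
    rw [one_mul, sub_zero, abs_of_nonneg hx] at hle
    exact hle.trans (hx1.trans (le_add_of_nonneg_left pi_div_two_pos.le))
  · have hle := abs_sineIntegral_sub_pi_div_two_le (one_pos.trans_le hx1)
    have := inv_le_one_of_one_le₀ hx1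
    rw [abs_le] at hle ⊢
    constructor <;> linarith [pi_pos]

/-- The Dirichlet kernel `sin (T * u) / u` of the line, without the factor `1 / π`. It is encoded
through `sinc` so that it takes its limit value `T` at `u = 0`. -/
noncomputable def dirichletKernel (T u : ℝ) : ℝ := T * sinc (T * u)

lemma dirichletKernel_neg (T u : ℝ) : dirichletKernel T (-u) = dirichletKernel T u := by
  rw [dirichletKernel, dirichletKernel, mul_neg, sinc_neg]

lemma dirichletKernel_of_ne_zero (T : ℝ) {u : ℝ} (hu : u ≠ 0) :
    dirichletKernel T u = sin (T * u) / u := by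
  rcases eq_or_ne T 0 with rfl | hT
  · simp [dirichletKernel]
  · rw [dirichletKernel, sinc_of_ne_zero (mul_ne_zero hT hu)]
    field_simp

lemma abs_dirichletKernel_le (T u : ℝ) : |dirichletKernel T u| ≤ |T| := by
  rw [dirichletKernel, abs_mul]
  exact mul_le_of_le_one_right (abs_nonneg T) (abs_sinc_le_one _)

@[fun_prop]
lemma continuous_dirichletKernel (T : ℝ) : Continuous (dirichletKernel T) := by
  unfold dirichletKernel
  fun_prop

lemma integral_dirichletKernel (T a b : ℝ) :
    ∫ u in a..b, dirichletKernel T u = sineIntegral (T * b) - sineIntegral (T * a) := by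
  have hsinc (c d : ℝ) : IntervalIntegrable sinc volume c d :=
    continuous_sinc.intervalIntegrable c d
  simp only [dirichletKernel]
  rw [intervalIntegral.integral_const_mul, intervalIntegral.mul_integral_comp_mul_left,
    sineIntegral, sineIntegral, intervalIntegral.integral_interval_sub_left (hsinc _ _) (hsinc _ _)]

lemma integral_exp_I_mul_mul (T y : ℝ) :
    ∫ s in (-T)..T, Complex.exp (Complex.I * y * s) = ((2 * dirichletKernel T y : ℝ) : ℂ) := by
  rcases eq_or_ne y 0 with rfl | hy
  · simp [dirichletKernel, two_mul]
  have hscale := intervalIntegral.integral_comp_mul_left (a := -T) (b := T)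
    (fun t : ℝ ↦ Complex.exp (t * Complex.I)) hy
  rw [mul_neg, integral_exp_mul_I_eq_sinc] at hscale
  calc ∫ s in (-T)..T, Complex.exp (Complex.I * y * s)
      = ∫ s in (-T)..T, Complex.exp ((y * s : ℝ) * Complex.I) := by
        congr with s
        push_cast
        ring_nf
    _ = y⁻¹ • (2 * (y * T : ℝ) * (sinc (y * T) : ℂ)) := hscale
    _ = ((2 * dirichletKernel T y : ℝ) : ℂ) := by
        have hy' : (y : ℂ) ≠ 0 := Complex.ofReal_ne_zero.2 hy
        rw [Complex.real_smul, mul_comm y T, dirichletKernel]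
        push_cast
        field_simp

section RealSpace

variable {E : Type*} [NormedAddCommGroup E] [NormedSpace ℝ E]

lemma integrable_dirichletKernel_smul {μ : Measure ℝ} {g : ℝ → E} (hg : Integrable g μ) (T : ℝ) :
    Integrable (fun u ↦ dirichletKernel T u • g u) μ :=
  Integrable.bdd_smul (𝕜 := ℝ) hg |T| (continuous_dirichletKernel T).aestronglyMeasurable
    (.of_forall (abs_dirichletKernel_le T))

lemma integral_indicator_Ici_of_lt_of_le {k : ℝ → E} {a b v : ℝ} (hav : a < v) (hvb : v ≤ b) :
    ∫ u in a..b, (Ici v).indicator k u = ∫ u in v..b, k u := by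
  have hinter : Ioc a b ∩ Ici v = Icc v b := by
    ext u
    simp only [mem_inter_iff, mem_Ioc, mem_Ici, mem_Icc]
    constructor <;> grind
  rw [intervalIntegral.integral_of_le (hav.le.trans hvb), intervalIntegral.integral_of_le hvb,
    setIntegral_indicator measurableSet_Ici, hinter, integral_Icc_eq_integral_Ioc]

lemma integral_smul_integral_eq_integral_integral_smul [CompleteSpace E] {k : ℝ → ℝ} {q : ℝ → E}
    {a b : ℝ} (hab : a ≤ b) (hk : IntervalIntegrable k volume a b)
    (hq : IntervalIntegrable q volume a b) :
    ∫ u in a..b, k u • ∫ v in a..u, q v = ∫ v in a..b, (∫ u in v..b, k u) • q v := by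
  have hint : IntegrableOn (Function.uncurry fun u v ↦ (Iic u).indicator (fun v ↦ k u • q v) v)
      (uIoc a b ×ˢ uIoc a b) := by
    rw [intervalIntegrable_iff] at hk hq
    rw [IntegrableOn, Measure.volume_eq_prod, ← Measure.prod_restrict]
    exact (hk.smul_prod hq).indicator (measurableSet_le measurable_snd measurable_fst)
  calc ∫ u in a..b, k u • ∫ v in a..u, q v
      = ∫ u in a..b, ∫ v in a..b, (Iic u).indicator (fun v ↦ k u • q v) v := by
        refine intervalIntegral.integral_congr fun u hu ↦ ?_
        rw [uIcc_of_le hab] at hu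
        rw [← intervalIntegral.integral_smul]
        exact (intervalIntegral.integral_indicator hu).symm
    _ = ∫ v in a..b, ∫ u in a..b, (Iic u).indicator (fun v ↦ k u • q v) v :=
        intervalIntegral_intervalIntegral_swap hint
    _ = ∫ v in a..b, (∫ u in v..b, k u) • q v := by
        refine intervalIntegral.integral_congr_uIoo fun v hv ↦ ?_
        rw [uIoo_of_le hab] at hv
        have (u : ℝ) : (Iic u).indicator (fun v ↦ k u • q v) v =
          (Ici v).indicator (fun u ↦ k u • q v) u := rfl
        simp_rw [this]
        rw [integral_indicator_Ici_of_lt_of_le hv.1 hv.2.le, intervalIntegral.integral_smul_const]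

lemma tendsto_integral_dirichletKernel_smul_primitive [CompleteSpace E] {q : ℝ → E} {δ : ℝ}
    (hδ : 0 < δ) (hq : IntervalIntegrable q volume 0 δ) :
    Tendsto (fun T : ℝ ↦ ∫ u in (0)..δ, dirichletKernel T u • ∫ v in (0)..u, q v) atTop (𝓝 0) := by
  have hpos {v : ℝ} (hv : v ∈ uIoc 0 δ) : 0 < v := (uIoc_of_le hδ.le ▸ hv).1
  have hlim (v : ℝ) (hv : 0 < v) : Tendsto (fun T : ℝ ↦ sineIntegral (T * v)) atTop (𝓝 (π / 2)) :=
    tendsto_sineIntegral_atTop.comp (tendsto_id.atTop_mul_const hv)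
  have hdom : Tendsto
      (fun T : ℝ ↦ ∫ v in (0)..δ, (sineIntegral (T * δ) - sineIntegral (T * v)) • q v) atTop
      (𝓝 (∫ _ in (0)..δ, (0 : E))) := by
    refine intervalIntegral.tendsto_integral_filter_of_dominated_convergence
      (fun v ↦ 2 * (π / 2 + 1) * ‖q v‖) (.of_forall fun T ↦ ?_) ?_ (hq.norm.const_mul _)
      (.of_forall fun v hv ↦ ?_)
    · have := continuous_sineIntegral
      exact (Continuous.aestronglyMeasurable (by fun_prop)).smul hq.def'.aestronglyMeasurable
    · filter_upwards [eventually_ge_atTop 0] with T hT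
      refine .of_forall fun v hv ↦ ?_
      rw [norm_smul, two_mul]
      gcongr
      exact (norm_sub_le _ _).trans (add_le_add (abs_sineIntegral_le (mul_nonneg hT hδ.le))
        (abs_sineIntegral_le (mul_nonneg hT (hpos hv).le)))
    · simpa using ((hlim δ hδ).sub (hlim v (hpos hv))).smul_const (q v)
  rw [intervalIntegral.integral_zero] at hdom
  refine hdom.congr fun T ↦ ?_
  rw [integral_smul_integral_eq_integral_integral_smul hδ.le
    ((continuous_dirichletKernel T).intervalIntegrable _ _) hq]
  simp_rw [integral_dirichletKernel]

lemma tendsto_integral_dirichletKernel_smul_of_eq_add_integral [CompleteSpace E] {g q : ℝ → E}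
    {c : E} {δ : ℝ} (hδ : 0 < δ) (hq : IntervalIntegrable q volume 0 δ)
    (hg : ∀ u ∈ Ioc 0 δ, g u = c + ∫ v in (0)..u, q v) :
    Tendsto (fun T : ℝ ↦ ∫ u in (0)..δ, dirichletKernel T u • g u) atTop (𝓝 ((π / 2) • c)) := by
  have hconst : Tendsto (fun T : ℝ ↦ sineIntegral (T * δ) • c) atTop (𝓝 ((π / 2) • c)) :=
    (tendsto_sineIntegral_atTop.comp (tendsto_id.atTop_mul_const hδ)).smul_const c
  have hsum := hconst.add (tendsto_integral_dirichletKernel_smul_primitive hδ hq)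
  rw [add_zero] at hsum
  refine hsum.congr fun T ↦ ?_
  have hk : Continuous (dirichletKernel T) := continuous_dirichletKernel T
  calc sineIntegral (T * δ) • c + ∫ u in (0)..δ, dirichletKernel T u • ∫ v in (0)..u, q v
      = (∫ u in (0)..δ, dirichletKernel T u • c) +
          ∫ u in (0)..δ, dirichletKernel T u • ∫ v in (0)..u, q v := by
        rw [intervalIntegral.integral_smul_const, integral_dirichletKernel, mul_zero]
        simp [sineIntegral]
    _ = ∫ u in (0)..δ, dirichletKernel T u • (c + ∫ v in (0)..u, q v) := by
        simp_rw [smul_add]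
        refine (intervalIntegral.integral_add ?_ ?_).symm
        · exact Continuous.intervalIntegrable (by fun_prop) _ _
        · refine IntervalIntegrable.continuousOn_smul ?_ hk.continuousOn
          exact (intervalIntegral.continuousOn_primitive_interval' hq
            left_mem_uIcc).intervalIntegrable
    _ = ∫ u in (0)..δ, dirichletKernel T u • g u := by
        refine intervalIntegral.integral_congr_uIoo fun u hu ↦ ?_
        rw [uIoo_of_le hδ.le] at hu
        simp only [hg u (Ioo_subset_Ioc_self hu)]

lemma sub_eq_intervalIntegral_of_forall_le {f h : ℝ → E}
    (hac : ∀ x y : ℝ, x ≤ y → f y - f x = ∫ t in x..y, h t) (x y : ℝ) :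
    f y - f x = ∫ t in x..y, h t := by
  rcases le_total x y with hxy | hyx
  · exact hac x y hxy
  · rw [intervalIntegral.integral_symm, ← hac y x hyx, neg_sub]

lemma integral_dirichletKernel_sub_smul {f : ℝ → E} (hf : Integrable f) (x T : ℝ) :
    ∫ t, dirichletKernel T (x - t) • f t =
      (∫ u in Ioi 0, dirichletKernel T u • f (x + u)) +
        ∫ u in Ioi 0, dirichletKernel T u • f (x - u) := by
  have hint := integrable_dirichletKernel_smul (hf.comp_sub_left x) T
  calc ∫ t, dirichletKernel T (x - t) • f t = ∫ u, dirichletKernel T u • f (x - u) := by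
        rw [← integral_sub_left_eq_self _ volume x]
        simp only [sub_sub_cancel]
    _ = (∫ u in Iic 0, dirichletKernel T u • f (x - u)) +
          ∫ u in Ioi 0, dirichletKernel T u • f (x - u) :=
        (intervalIntegral.integral_Iic_add_Ioi hint.integrableOn hint.integrableOn).symm
    _ = (∫ u in Ioi 0, dirichletKernel T u • f (x + u)) +
          ∫ u in Ioi 0, dirichletKernel T u • f (x - u) := by
        rw [← neg_zero, ← integral_comp_neg_Ioi]
        simp only [dirichletKernel_neg, sub_neg_eq_add, neg_zero]

end RealSpace

section ComplexSpace

variable {E : Type*} [NormedAddCommGroup E] [NormedSpace ℂ E]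

lemma sin_mul_smul_eq_fourierChar_smul_sub (T u : ℝ) (v : E) :
    sin (T * u) • v =
      (2 * Complex.I)⁻¹ • (𝐞 (-(u * -(T / (2 * π)))) • v - 𝐞 (-(u * (T / (2 * π)))) • v) := by
  have harg : 2 * π * (u * (T / (2 * π))) = T * u := by field_simp
  rw [← Complex.coe_smul, Circle.smul_def, Circle.smul_def, ← sub_smul, smul_smul,
    fourierChar_apply, fourierChar_apply, mul_neg u, neg_neg, mul_neg, harg, Complex.ofReal_sin,
    Complex.sin, Complex.ofReal_neg, mul_inv, Complex.inv_I]
  congr 1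
  ring

lemma tendsto_integral_sin_mul_smul {g : ℝ → E} (hg : Integrable g) :
    Tendsto (fun T : ℝ ↦ ∫ u, sin (T * u) • g u) atTop (𝓝 0) := by
  have hT : Tendsto (fun T : ℝ ↦ T / (2 * π)) atTop atTop := tendsto_id.atTop_div_const two_pi_pos
  have hpos := (zero_at_infty_fourier g).comp (hT.mono_right atTop_le_cocompact)
  have hneg := (zero_at_infty_fourier g).comp
    ((tendsto_neg_atTop_atBot.comp hT).mono_right atBot_le_cocompact)
  have hsub := (hneg.sub hpos).const_smul ((2 * Complex.I)⁻¹)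
  rw [sub_zero, smul_zero] at hsub
  refine hsub.congr fun T ↦ ?_
  have hint (w : ℝ) : Integrable fun u ↦ 𝐞 (-(u * w)) • g u := by
    simpa [mul_comm] using! (fourierIntegral_convergent_iff w).2 hg
  simp only [Function.comp_apply, fourier_real_eq]
  simp_rw [sin_mul_smul_eq_fourierChar_smul_sub]
  rw [integral_smul, integral_sub (hint _) (hint _)]

lemma tendsto_integral_Ioi_dirichletKernel_smul_of_pos {g : ℝ → E} {δ : ℝ} (hδ : 0 < δ)
    (hg : IntegrableOn g (Ioi δ)) :
    Tendsto (fun T : ℝ ↦ ∫ u in Ioi δ, dirichletKernel T u • g u) atTop (𝓝 0) := by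
  have hdiv : IntegrableOn (fun u ↦ u⁻¹ • g u) (Ioi δ) := by
    refine Integrable.bdd_smul (𝕜 := ℝ) hg δ⁻¹ measurable_inv.aestronglyMeasurable ?_
    filter_upwards [ae_restrict_mem measurableSet_Ioi] with u hu
    rw [norm_inv, norm_of_nonneg (hδ.trans hu).le]
    exact inv_anti₀ hδ (le_of_lt hu)
  refine (tendsto_integral_sin_mul_smul
    (hdiv.integrable_indicator measurableSet_Ioi)).congr fun T ↦ ?_
  simp_rw [← indicator_smul_apply (Ioi δ) (fun u ↦ sin (T * u))]
  rw [integral_indicator measurableSet_Ioi]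
  refine setIntegral_congr_fun measurableSet_Ioi fun u hu ↦ ?_
  simp only [smul_smul, dirichletKernel_of_ne_zero T (hδ.trans hu).ne', div_eq_mul_inv]

theorem tendsto_integral_Ioi_dirichletKernel_smul [CompleteSpace E] {g q : ℝ → E} {c : E} {δ : ℝ}
    (hgi : IntegrableOn g (Ioi 0)) (hδ : 0 < δ) (hq : IntervalIntegrable q volume 0 δ)
    (hg : ∀ u ∈ Ioc 0 δ, g u = c + ∫ v in (0)..u, q v) :
    Tendsto (fun T : ℝ ↦ ∫ u in Ioi 0, dirichletKernel T u • g u) atTop (𝓝 ((π / 2) • c)) := by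
  have hsum := (tendsto_integral_dirichletKernel_smul_of_eq_add_integral hδ hq hg).add
    (tendsto_integral_Ioi_dirichletKernel_smul_of_pos hδ (hgi.mono_set (Ioi_subset_Ioi hδ.le)))
  rw [add_zero] at hsum
  refine hsum.congr fun T ↦ ?_
  have hkg : IntegrableOn (fun u ↦ dirichletKernel T u • g u) (Ioi 0) :=
    integrable_dirichletKernel_smul hgi T
  exact intervalIntegral.integral_interval_add_Ioi hkg (hkg.mono_set (Ioi_subset_Ioi hδ.le))

open Complex in
lemma integral_exp_smul_integral_exp_smul [CompleteSpace E] {f : ℝ → E} (hf : Integrable f)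
    (x T : ℝ) :
    ∫ s in (-T)..T, cexp (I * x * s) • ∫ t : ℝ, cexp (-(I * s * t)) • f t =
      (2 : ℝ) • ∫ t, dirichletKernel T (x - t) • f t := by
  have hint : Integrable (Function.uncurry fun s t : ℝ ↦ cexp (I * (x - t : ℝ) * s) • f t)
      ((volume.restrict (uIoc (-T) T)).prod volume) := by
    have hone : IntegrableOn (fun _ : ℝ ↦ (1 : ℂ)) (uIoc (-T) T) := integrableOn_const (by simp)
    have hprod := Integrable.smul_prod hone hf
    simp only [one_smul] at hprod
    refine hprod.bdd_smul 1 (Continuous.aestronglyMeasurable (by fun_prop)) (.of_forall fun p ↦ ?_)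
    rw [mul_right_comm, mul_assoc, mul_comm, ← ofReal_mul, norm_exp_ofReal_mul_I]
  calc ∫ s in (-T)..T, cexp (I * x * s) • ∫ t : ℝ, cexp (-(I * s * t)) • f t
      = ∫ s in (-T)..T, ∫ t : ℝ, cexp (I * (x - t : ℝ) * s) • f t := by
        congr with s
        rw [← integral_smul]
        congr with t
        rw [smul_smul, ← Complex.exp_add]
        push_cast
        ring_nf
    _ = ∫ t, ∫ s in (-T)..T, cexp (I * (x - t : ℝ) * s) • f t :=
        intervalIntegral_integral_swap hint
    _ = (2 : ℝ) • ∫ t, dirichletKernel T (x - t) • f t := by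
        rw [← integral_smul]
        congr with t
        rw [intervalIntegral.integral_smul_const, integral_exp_I_mul_mul, Complex.coe_smul,
          mul_smul]

theorem fourier_inversion_absolutely_continuous_general [CompleteSpace E]
    {f h : ℝ → E} {x δ : ℝ} (hf : Integrable f) (hδ : 0 < δ)
    (hh : IntervalIntegrable h volume (x - δ) (x + δ))
    (hac : ∀ y ∈ Icc (x - δ) (x + δ), f y - f x = ∫ t in x..y, h t) :
    Tendsto (fun T : ℝ ↦ (1 / (2 * (π : ℂ))) • ∫ s in (-T)..T, Complex.exp (Complex.I * x * s) •
      ∫ t : ℝ, Complex.exp (-(Complex.I * s * t)) • f t) atTop (𝓝 (f x)) := by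
  have hx : x ∈ uIcc (x - δ) (x + δ) := by rw [uIcc_of_le] <;> grind
  have hright : Tendsto (fun T : ℝ ↦ ∫ u in Ioi 0, dirichletKernel T u • f (x + u)) atTop
      (𝓝 ((π / 2) • f x)) := by
    refine tendsto_integral_Ioi_dirichletKernel_smul (q := fun v ↦ h (x + v))
      (hf.comp_add_left x).integrableOn hδ ?_ fun u hu ↦ ?_
    · simpa using (hh.mono_set (uIcc_subset_uIcc_right hx)).comp_add_left x
    · rw [intervalIntegral.integral_comp_add_left, add_zero, ← hac _ ⟨by grind, by grind⟩]
      abel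
  have hleft : Tendsto (fun T : ℝ ↦ ∫ u in Ioi 0, dirichletKernel T u • f (x - u)) atTop
      (𝓝 ((π / 2) • f x)) := by
    refine tendsto_integral_Ioi_dirichletKernel_smul (q := fun v ↦ -h (x - v))
      (hf.comp_sub_left x).integrableOn hδ ?_ fun u hu ↦ ?_
    · simpa using! ((hh.mono_set (uIcc_subset_uIcc_left hx)).comp_sub_left x).symm.neg
    · rw [intervalIntegral.integral_neg, intervalIntegral.integral_comp_sub_left, sub_zero,
        ← intervalIntegral.integral_symm, ← hac _ ⟨by grind, by grind⟩]
      abel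
  convert! ((hright.add hleft).const_smul (2 : ℝ)).const_smul (1 / (2 * (π : ℂ))) using 2 with T
  · rw [integral_exp_smul_integral_exp_smul hf, integral_dirichletKernel_sub_smul hf]
  · rw [← two_smul ℝ ((π / 2) • f x), smul_smul, smul_smul, ← Complex.coe_smul, smul_smul]
    have hpi : (π : ℂ) ≠ 0 := Complex.ofReal_ne_zero.2 pi_ne_zero
    have hone : 1 / (2 * (π : ℂ)) * ((2 * 2 * (π / 2) : ℝ) : ℂ) = 1 := by
      push_cast
      field_simp
    rw [hone, one_smul]

end ComplexSpace

/-- Fourier inversion for an integrable, absolutely continuous function with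
integrable derivative: `f(x) = (1/(2π)) lim_{T→∞} ∫_{-T}^{T} e^{ixs} f̂(s) ds`. -/
theorem fourier_inversion_absolutely_continuous (f : ℝ → ℝ)
    (hf : MeasureTheory.Integrable f)
    (h : ℝ → ℝ) (hh : MeasureTheory.Integrable h)
    (hac : ∀ x y : ℝ, x ≤ y → f y - f x = ∫ t in x..y, h t)
    (x : ℝ) :
    Filter.Tendsto
      (fun T : ℝ => (1 / (2 * (Real.pi : ℂ))) *
        ∫ s in (-T)..T, Complex.exp (Complex.I * x * s) *
          (∫ t : ℝ, Complex.exp (-(Complex.I * s * t)) * ((f t : ℝ) : ℂ)))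
      Filter.atTop
      (nhds ((f x : ℝ) : ℂ)) := by
  have hac' (y : ℝ) : (f y : ℂ) - f x = ∫ t in x..y, (h t : ℂ) := by
    rw [intervalIntegral.integral_ofReal, ← sub_eq_intervalIntegral_of_forall_le hac,
      Complex.ofReal_sub]
  exact fourier_inversion_absolutely_continuous_general hf.ofReal one_pos
    hh.ofReal.intervalIntegrable fun y _ ↦ hac' y
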